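/- Let ψ be any growing function and let φ be any growing function satisfying φ(n) ≤ n/(log₂ n + log₂ ψ(n)) for all sufficiently large n. Then there exists a sequence q₀(n) with q₀(n) ~ n·2^{n−⌈n/φ(n)⌉} such that L(n, q₀(n)) ≍ 2^n, i.e., there are constants 0 < c ≤ C and N such that c·2^n ≤ L(n, q₀(n)) ≤ C·2^n for all n ≥ N. -/

import Mathlib

open Filter

namespace Rev

/-- A reversible gate `TOF(I; t)` on `N` lines: a control set `I` with `|I| ≤ 2`
and a target `t ∉ I`.  `|I| = 0, 1, 2` correspond to NOT, CNOT, C²NOT. -/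
structure Gate (N : ℕ) where
  I : Finset (Fin N)
  t : Fin N
  card_le : I.card ≤ 2
  t_not_mem : t ∉ I

/-- The transformation computed by a gate: the target coordinate is XORed with the
conjunction of the control coordinates (the empty conjunction is `1`). -/
def Gate.apply {N : ℕ} (g : Gate N) (x : Fin N → Bool) : Fin N → Bool :=
  fun j => if j = g.t then xor (x g.t) (decide (∀ i ∈ g.I, x i = true)) else x j

/-- A reversible circuit: a finite sequence (composition) of gates. -/
abbrev Circuit (N : ℕ) := List (Gate N)

/-- The transformation computed by a circuit (composition of the gate maps). -/
def Circuit.eval {N : ℕ} (S : Circuit N) (x : Fin N → Bool) : Fin N → Bool :=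
  S.foldl (fun v g => g.apply v) x

/-- Gate complexity: the number of gates. -/
def Circuit.L {N : ℕ} (S : Circuit N) : ℕ := S.length

/-- The number of NOT and CNOT gates. -/
def Circuit.LC {N : ℕ} (S : Circuit N) : ℕ := (S.filter fun g => g.I.card ≤ 1).length

/-- The number of C²NOT (Toffoli) gates. -/
def Circuit.LT {N : ℕ} (S : Circuit N) : ℕ := (S.filter fun g => g.I.card = 2).length

/-- The quantum weight, given weights `WC` for NOT/CNOT gates and `WT` for C²NOT gates. -/
noncomputable def Circuit.W {N : ℕ} (WC WT : ℝ) (S : Circuit N) : ℝ :=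
  WC * S.LC + WT * S.LT

/-- A circuit has depth one if the sets `{t} ∪ I` of its gates are pairwise disjoint. -/
def DepthOne {N : ℕ} (S : Circuit N) : Prop :=
  S.Pairwise fun g₁ g₂ => Disjoint (insert g₁.t g₁.I) (insert g₂.t g₂.I)

/-- The depth of a circuit: the minimal number of depth-one sub-circuits whose
concatenation is the circuit. -/
noncomputable def Circuit.D {N : ℕ} (S : Circuit N) : ℕ :=
  sInf {d | ∃ parts : List (Circuit N),
    parts.length = d ∧ parts.flatten = S ∧ ∀ p ∈ parts, DepthOne p}

/-- Padding an input vector with zero values on `q` additional inputs. -/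
def pad {n q : ℕ} (x : Fin n → Bool) : Fin (n + q) → Bool :=
  fun i => if h : (i : ℕ) < n then x ⟨i, h⟩ else false

/-- A circuit `S` with `n + q` inputs implements `f : 𝔹ⁿ → 𝔹ᵐ` with `q` additional
inputs: there is a permutation `π` of the output positions such that for every `x`,
applying `S` to `⟨x, 0, …, 0⟩` and permuting the coordinates by `π` yields a vector
whose first `m` coordinates equal `f x`. -/
def Implements {n q m : ℕ} (S : Circuit (n + q)) (f : (Fin n → Bool) → Fin m → Bool) :
    Prop :=
  m ≤ n + q ∧ ∃ π : Equiv.Perm (Fin (n + q)), ∀ x : Fin n → Bool, ∀ j : Fin m,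
    ∀ hj : (j : ℕ) < n + q, Circuit.eval S (pad x) (π ⟨j, hj⟩) = f x j

/-- `f ∈ F(n, q)`: `f : 𝔹ⁿ → 𝔹ⁿ` is implementable with `q` additional inputs. -/
def Implementable (n q : ℕ) (f : (Fin n → Bool) → Fin n → Bool) : Prop :=
  ∃ S : Circuit (n + q), Implements S f

/-- `L(f, q)`: minimal gate complexity of a circuit implementing `f` with `q`
additional inputs. -/
noncomputable def Lmin (n q : ℕ) (f : (Fin n → Bool) → Fin n → Bool) : ℕ :=
  sInf {l | ∃ S : Circuit (n + q), Implements S f ∧ S.L = l}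

/-- The Shannon gate complexity function `L(n, q)`. -/
noncomputable def Lsh (n q : ℕ) : ℕ :=
  sSup {l | ∃ f, Implementable n q f ∧ Lmin n q f = l}

/-- `D(f, q)`: minimal depth of a circuit implementing `f` with `q` additional inputs. -/
noncomputable def Dmin (n q : ℕ) (f : (Fin n → Bool) → Fin n → Bool) : ℕ :=
  sInf {d | ∃ S : Circuit (n + q), Implements S f ∧ S.D = d}

/-- The Shannon depth function `D(n, q)`. -/
noncomputable def Dsh (n q : ℕ) : ℕ :=
  sSup {d | ∃ f, Implementable n q f ∧ Dmin n q f = d}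

/-- `W(f, q)`: minimal quantum weight of a circuit implementing `f` with `q`
additional inputs. -/
noncomputable def Wmin (WC WT : ℝ) (n q : ℕ) (f : (Fin n → Bool) → Fin n → Bool) : ℝ :=
  sInf {w | ∃ S : Circuit (n + q), Implements S f ∧ Circuit.W WC WT S = w}

/-- The Shannon quantum weight function `W(n, q)`. -/
noncomputable def Wsh (WC WT : ℝ) (n q : ℕ) : ℝ :=
  sSup {w | ∃ f, Implementable n q f ∧ Wmin WC WT n q f = w}

/-- `a ~ b`: `a n / b n → 1`. -/
def AsympEquiv (a b : ℕ → ℝ) : Prop :=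
  Tendsto (fun n => a n / b n) atTop (nhds 1)

/-- `a ≲ b`: `limsup (a n / b n) ≤ 1`. -/
def AsympLE (a b : ℕ → ℝ) : Prop :=
  Filter.limsup (fun n => a n / b n) atTop ≤ 1

/-- A growing function: nondecreasing and tending to `+∞`. -/
def Growing (φ : ℕ → ℝ) : Prop :=
  Monotone φ ∧ Tendsto φ atTop atTop

/-- `2 ^ (n - ⌈n / φ(n)⌉)` as a real number. -/
noncomputable def pow2e (φ : ℕ → ℝ) (n : ℕ) : ℝ :=
  (2 : ℝ) ^ ((n : ℤ) - ⌈(n : ℝ) / φ n⌉)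

end Rev

namespace Rev
open Finset

theorem bxor (a b : Bool) : xor a b = a + b := by cases a <;> cases b <;> decide


theorem eval_cons {N : ℕ} (g : Gate N) (S : Circuit N) (v : Fin N → Bool) :
    Circuit.eval (g :: S) v = Circuit.eval S (g.apply v) := rfl

theorem eval_append {N : ℕ} (S T : Circuit N) (v : Fin N → Bool) :
    Circuit.eval (S ++ T) v = Circuit.eval T (Circuit.eval S v) := by
  simp [Circuit.eval, List.foldl_append]

/-- the value of a product term -/
def tv {α : Type*} (v : α → Bool) (I : Finset α) : Bool := decide (∀ i ∈ I, v i = true)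

theorem exists_block {N : ℕ} (τ : Fin N) (L : List (Finset (Fin N)))
    (h : ∀ I ∈ L, I.card ≤ 2 ∧ τ ∉ I) :
    ∃ S : Circuit N, S.length = L.length ∧ ∀ v, Circuit.eval S v =
      Function.update v τ (v τ + (L.map (tv v)).sum) := by
  induction L with
  | nil => exact ⟨[], rfl, fun v => by simp [Circuit.eval]⟩
  | cons I L ih =>
    obtain ⟨S, hS, hv⟩ := ih (fun J hJ => h J (List.mem_cons_of_mem _ hJ))
    have hI := h I List.mem_cons_self
    refine ⟨⟨I, τ, hI.1, hI.2⟩ :: S, by simp [hS], fun v => ?_⟩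
    have e : (Gate.apply ⟨I, τ, hI.1, hI.2⟩ v) = Function.update v τ (v τ + tv v I) := by
      funext j
      by_cases hj : j = τ
      · subst hj; simp only [Gate.apply, tv, if_true, Function.update_self]; rw [bxor]; congr!
      · simp [Gate.apply, hj]
    rw [eval_cons, hv, e]
    have e2 : L.map (tv (Function.update v τ (v τ + tv v I))) = L.map (tv v) := by
      apply List.map_congr_left
      intro J hJ
      have := (h J (List.mem_cons_of_mem _ hJ)).2
      unfold tv
      congr 1
      apply propext
      refine forall₂_congr fun i hi => ?_
      rw [Function.update_of_ne]
      rintro rfl; exact this hi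
    rw [e2]
    simp [add_assoc]

theorem exists_circuit {n q : ℕ} {κ : Type} [Fintype κ] [DecidableEq κ]
    (hc : Fintype.card κ ≤ q) (g : Fin n ⊕ κ → (Fin n → Bool) → Bool)
    (hg : ∀ i x, g (Sum.inl i) x = x i) (rank : Fin n ⊕ κ → ℕ) (c : κ → ℕ)
    (hT : ∀ t : κ, ∃ T : List (Finset (Fin n ⊕ κ)), T.length ≤ c t ∧
      (∀ I ∈ T, I.card ≤ 2 ∧ ∀ i ∈ I, rank i < rank (Sum.inr t)) ∧
      ∀ x, g (Sum.inr t) x = (T.map (tv fun i => g i x)).sum) :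
    ∃ (S : Circuit (n + q)) (φ : κ ↪ Fin (n + q)), S.length ≤ ∑ t, c t ∧
      ∀ x t, Circuit.eval S (pad x) (φ t) = g (Sum.inr t) x := by
  obtain ⟨ε⟩ : Nonempty (κ ↪ Fin q) := Function.Embedding.nonempty_of_card_le (by simpa using hc)
  let φ : Fin n ⊕ κ → Fin (n + q) := Sum.elim (Fin.castAdd q) (fun t => Fin.natAdd n (ε t))
  have hφ : Function.Injective φ := by
    rintro (i | i) (j | j) h
    · simpa [φ] using h
    · simp [φ, Fin.ext_iff] at h; omega
    · simp [φ, Fin.ext_iff] at h; omega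
    · simpa [φ] using h
  have key : ∀ D : Finset κ, (∀ t ∈ D, ∀ u, rank (Sum.inr u) < rank (Sum.inr t) → u ∈ D) →
      ∃ S : Circuit (n + q), S.length ≤ ∑ t ∈ D, c t ∧
        ∀ x, (∀ i, Circuit.eval S (pad x) (φ (Sum.inl i)) = x i) ∧
          ∀ t, Circuit.eval S (pad x) (φ (Sum.inr t)) = if t ∈ D then g (Sum.inr t) x else false := by
    intro D
    induction D using Finset.induction_on_max_value (fun t => rank (Sum.inr t)) with
    | empty =>
      intro _
      refine ⟨[], by simp, fun x => ⟨fun i => ?_, fun t => ?_⟩⟩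
      · simp [Circuit.eval, pad, φ]
      · simp [Circuit.eval, pad, φ]
    | insert a s ha hmax ih =>
      intro hd
      obtain ⟨S, hS, hev⟩ := ih (by
        intro t ht u hu
        have := hd t (mem_insert_of_mem ht) u hu
        rcases mem_insert.1 this with rfl | h
        · exact absurd hu (not_lt.2 (hmax t ht))
        · exact h)
      obtain ⟨T, hTl, hTr, hTg⟩ := hT a
      obtain ⟨S', hS', hev'⟩ := exists_block (φ (Sum.inr a)) (T.map (fun I => I.map ⟨φ, hφ⟩)) (by
        intro J hJ
        obtain ⟨I, hI, rfl⟩ := List.mem_map.1 hJ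
        refine ⟨by simpa using (hTr I hI).1, ?_⟩
        intro hm
        obtain ⟨i, hi, hia⟩ := Finset.mem_map.1 hm
        have := hφ hia
        subst this
        exact lt_irrefl _ ((hTr I hI).2 _ hi))
      refine ⟨S ++ S', ?_, fun x => ?_⟩
      · rw [sum_insert ha, List.length_append, hS', List.length_map]; omega
      have hsum : ((T.map (fun I => I.map ⟨φ, hφ⟩)).map (tv (Circuit.eval S (pad x)))).sum
          = g (Sum.inr a) x := by
        rw [hTg, List.map_map]
        congr 1
        apply List.map_congr_left
        intro I hI
        simp only [Function.comp, tv]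
        congr 1
        apply propext
        simp only [Finset.mem_map, Function.Embedding.coeFn_mk, forall_exists_index, and_imp,
          forall_apply_eq_imp_iff₂]
        refine forall₂_congr fun i hi => ?_
        rcases i with i | t
        · rw [(hev x).1, hg]
        · rw [(hev x).2, if_pos]
          have h1 := (hTr I hI).2 _ hi
          rcases mem_insert.1 (hd a (mem_insert_self _ _) t h1) with rfl | h
          · exact absurd h1 (lt_irrefl _)
          · exact h
      rw [eval_append, hev', hsum]
      refine ⟨fun i => ?_, fun t => ?_⟩
      · rw [Function.update_of_ne (fun h => by simpa using hφ h), (hev x).1]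
      · by_cases hta : t = a
        · subst hta
          rw [Function.update_self, (hev x).2, if_neg ha, if_pos (mem_insert_self _ _)]
          exact zero_add _
        · rw [Function.update_of_ne (fun h => hta (by simpa using hφ h)), (hev x).2]
          simp [hta]
  obtain ⟨S, hS, hev⟩ := key univ (by simp)
  refine ⟨S, ⟨fun t => φ (Sum.inr t), fun a b h => by simpa using hφ h⟩, hS, fun x t => ?_⟩
  have := (hev x).2 t
  rw [if_pos (mem_univ _)] at this
  exact this

theorem implements_of {n q : ℕ} (S : Circuit (n + q)) (f : (Fin n → Bool) → Fin n → Bool)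
    (o : Fin n ↪ Fin (n + q)) (h : ∀ x j, Circuit.eval S (pad x) (o j) = f x j) :
    Implements S f := by
  refine ⟨by omega, ?_⟩
  let e1 : {i // i ∈ Set.range (Fin.castAdd q : Fin n → Fin (n+q))} ≃ Fin n :=
    (Equiv.ofInjective _ (Fin.castAdd_injective n q)).symm
  let e2 : Fin n ≃ {i // i ∈ Set.range o} := Equiv.ofInjective _ o.injective
  refine ⟨(e1.trans e2).extendSubtype, fun x j hj => ?_⟩
  have : (⟨j, hj⟩ : Fin (n+q)) = Fin.castAdd q j := rfl
  rw [this, Equiv.extendSubtype_apply_of_mem _ _ ⟨j, rfl⟩, ← h]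
  congr 1
  have : e1 ⟨Fin.castAdd q j, ⟨j, rfl⟩⟩ = j := by
    simp only [e1]
    rw [Equiv.symm_apply_eq]; rfl
  simp [this, e2]

end Rev
namespace Rev
open Finset

abbrev Kap (n m k nb s : ℕ) : Type :=
  (Fin n × Bool) ⊕ ((Fin (m+1) × (Fin m → Bool)) ⊕ ((Fin (k+1) × (Fin k → Bool)) ⊕
    ((Fin nb × Finset (Fin s)) ⊕ Fin n)))

/-- prefix minterm -/
def mint {m : ℕ} (j : Fin (m+1)) (p y : Fin m → Bool) : Bool :=
  decide (∀ i : Fin m, i.castSucc < j → y i = p i)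

theorem mint_zero {m : ℕ} (p y : Fin m → Bool) : mint 0 p y = true := by
  simp [mint]

theorem mint_succ {m : ℕ} (j : Fin m) (p y : Fin m → Bool) :
    mint j.succ p y = true ↔ mint j.castSucc p y = true ∧ y j = p j := by
  simp only [mint, decide_eq_true_eq]
  constructor
  · intro h
    refine ⟨fun i hi => h i (hi.trans Fin.castSucc_lt_succ), h j Fin.castSucc_lt_succ⟩
  · rintro ⟨h1, h2⟩ i hi
    rcases (Fin.lt_or_eq_of_le (Fin.castSucc_lt_succ_iff.1 hi)) with h | h
    · exact h1 i h
    · subst h; exact h2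

theorem mint_last {m : ℕ} (p y : Fin m → Bool) : mint (Fin.last m) p y = decide (y = p) := by
  simp [mint, funext_iff, Fin.castSucc_lt_last]

theorem tv_pair {α : Type*} [DecidableEq α] (v : α → Bool) (a b : α) :
    tv v {a, b} = (v a && v b) := by
  simp [tv]

theorem tv_single {α : Type*} (v : α → Bool) (a : α) : tv v {a} = v a := by
  simp [tv]

theorem tv_empty {α : Type*} (v : α → Bool) : tv v ∅ = true := by
  simp [tv]

theorem bool_sum_ite {α : Type*} [DecidableEq α] (s : Finset α) (a : α) (F : α → Bool)
    (h : ∀ b, F b = true → b = a) : ∑ b ∈ s, F b = if a ∈ s then F a else false := by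
  have : ∀ b ∈ s, F b = if b = a then F a else 0 := by
    intro b _
    by_cases hb : b = a
    · simp [hb]
    · rw [if_neg hb]
      have := mt (h b) hb
      exact Bool.eq_false_iff.2 this
  rw [Finset.sum_congr rfl this, Finset.sum_ite_eq']
  rfl

/-- minterm case, abstractly -/
theorem mint_case {α : Type*} [DecidableEq α] {m : ℕ} {X : Type*} (g : α → X → Bool) (rank : α → ℕ)
    (A : Fin (m+1) → (Fin m → Bool) → α) (Li : Fin m → Bool → α) (y : X → Fin m → Bool)
    (hA : ∀ j p x, g (A j p) x = mint j p (y x)) (hL : ∀ j b x, g (Li j b) x = (y x j == b))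
    (rA : ∀ j p, rank (A j p) = j + 2) (rL : ∀ j b, rank (Li j b) = 1)
    (j : Fin (m+1)) (p : Fin m → Bool) :
    ∃ T : List (Finset α), T.length ≤ 1 ∧
      (∀ I ∈ T, I.card ≤ 2 ∧ ∀ i ∈ I, rank i < rank (A j p)) ∧
      ∀ x, g (A j p) x = (T.map (tv fun i => g i x)).sum := by
  induction j using Fin.cases with
  | zero =>
    refine ⟨[∅], by simp, by simp, fun x => ?_⟩
    simp [hA, mint_zero, tv_empty]
  | succ j =>
    refine ⟨[{A j.castSucc p, Li j (p j)}], by simp, ?_, fun x => ?_⟩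
    · simp [rA, rL, Finset.card_le_two]
    · rw [hA, List.map_singleton, List.sum_singleton, tv_pair, hA, hL]
      rw [Bool.eq_iff_iff, mint_succ]
      simp

theorem exists_impl {m k s nb q : ℕ} (hnb : 2 ^ m ≤ nb * s)
    (hq : Fintype.card (Kap (m+k) m k nb s) ≤ q)
    (f : (Fin (m + k) → Bool) → Fin (m + k) → Bool) :
    ∃ S : Circuit (m + k + q), Implements S f ∧
      S.length ≤ (m+k) * 2 * 2 + ((m+1) * 2^m + ((k+1) * 2^k + (nb * 2^s * 2^m
        + (m+k) * (2^k * nb)))) := by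
  classical
  obtain ⟨e⟩ : Nonempty ((Fin m → Bool) ↪ Fin nb × Fin s) :=
    Function.Embedding.nonempty_of_card_le (by simpa using hnb)
  let xa : (Fin (m+k) → Bool) → Fin m → Bool := fun x i => x (Fin.castAdd k i)
  let xb : (Fin (m+k) → Bool) → Fin k → Bool := fun x i => x (Fin.natAdd m i)
  have hx : ∀ x, Fin.append (xa x) (xb x) = x := fun x => Fin.append_castAdd_natAdd
  let g : Fin (m+k) ⊕ Kap (m+k) m k nb s → (Fin (m+k) → Bool) → Bool :=
    Sum.elim (fun i x => x i) (Sum.elim (fun l x => x l.1 == l.2)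
      (Sum.elim (fun a x => mint a.1 a.2 (xa x)) (Sum.elim (fun a x => mint a.1 a.2 (xb x))
        (Sum.elim (fun a x => decide ((e (xa x)).1 = a.1 ∧ (e (xa x)).2 ∈ a.2))
          (fun i x => f x i)))))
  let rank : Fin (m+k) ⊕ Kap (m+k) m k nb s → ℕ :=
    Sum.elim (fun _ => 0) (Sum.elim (fun _ => 1)
      (Sum.elim (fun a => a.1 + 2) (Sum.elim (fun a => a.1 + 2)
        (Sum.elim (fun a => m + k + 3) (fun i => m + k + 4)))))
  let c : Kap (m+k) m k nb s → ℕ :=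
    (Sum.elim (fun _ => 2)
      (Sum.elim (fun a => 1) (Sum.elim (fun a => 1)
        (Sum.elim (fun a => 2^m) (fun i => 2^k * nb)))))
  let lI : Fin (m+k) → Fin (m+k) ⊕ Kap (m+k) m k nb s := Sum.inl
  let lL : Fin (m+k) → Bool → Fin (m+k) ⊕ Kap (m+k) m k nb s := fun i b => Sum.inr (Sum.inl (i, b))
  let lA : Fin (m+1) → (Fin m → Bool) → Fin (m+k) ⊕ Kap (m+k) m k nb s :=
    fun j p => Sum.inr (Sum.inr (Sum.inl (j, p)))
  let lB : Fin (k+1) → (Fin k → Bool) → Fin (m+k) ⊕ Kap (m+k) m k nb s :=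
    fun j p => Sum.inr (Sum.inr (Sum.inr (Sum.inl (j, p))))
  let lG : Fin nb → Finset (Fin s) → Fin (m+k) ⊕ Kap (m+k) m k nb s :=
    fun j p => Sum.inr (Sum.inr (Sum.inr (Sum.inr (Sum.inl (j, p)))))
  obtain ⟨S, φ, hS, hev⟩ := exists_circuit hq g (fun _ _ => rfl) rank c (by
    rintro (⟨i, b⟩ | ⟨j, p⟩ | ⟨j, p⟩ | ⟨b, T⟩ | i)
    · cases b with
      | true =>
        refine ⟨[{lI i}], by simp [c], by simp [rank, lI], fun x => ?_⟩
        simp [g, lI, tv_single]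
      | false =>
        refine ⟨[∅, {lI i}], by simp [c], by simp [rank, lI], fun x => ?_⟩
        simp only [List.map_cons, List.map_nil, List.sum_cons, List.sum_nil, tv_empty, tv_single]
        change (x i == false) = true + (x i + 0)
        cases x i <;> decide
    · exact mint_case g rank lA (fun i b => lL (Fin.castAdd k i) b) xa (fun _ _ _ => rfl)
        (fun _ _ _ => rfl) (fun _ _ => rfl) (fun _ _ => rfl) j p
    · exact mint_case g rank lB (fun i b => lL (Fin.natAdd m i) b) xb (fun _ _ _ => rfl)
        (fun _ _ _ => rfl) (fun _ _ => rfl) (fun _ _ => rfl) j p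
    · refine ⟨((univ.filter fun a => (e a).1 = b ∧ (e a).2 ∈ T).toList).map
        fun a => {lA (Fin.last m) a}, ?_, ?_, fun x => ?_⟩
      · rw [List.length_map, Finset.length_toList]
        refine (Finset.card_le_univ _).trans ?_
        simp [c]
      · intro I hI
        obtain ⟨a, -, rfl⟩ := List.mem_map.1 hI
        simp [rank, lA]
      · rw [List.map_map, Finset.sum_map_toList, bool_sum_ite _ (xa x)]
        · simp [g, tv_single, lA, mint_last]
        · intro a ha
          simp [g, tv_single, lA, mint_last] at ha
          exact ha.symm
    · refine ⟨((univ : Finset ((Fin k → Bool) × Fin nb)).toList).map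
        fun yb => {lB (Fin.last k) yb.1, lG yb.2 (univ.filter fun u =>
          ∃ a, e a = (yb.2, u) ∧ f (Fin.append a yb.1) i = true)}, ?_, ?_, fun x => ?_⟩
      · simp [c]
      · intro I hI
        obtain ⟨a, -, rfl⟩ := List.mem_map.1 hI
        refine ⟨Finset.card_le_two, ?_⟩
        simp [rank, lB, lG]
        omega
      · rw [List.map_map, Finset.sum_map_toList, bool_sum_ite _ (xb x, (e (xa x)).1)]
        · rw [if_pos (mem_univ _), Function.comp, tv_pair]
          simp only [g, lB, lG, Sum.elim_inl, Sum.elim_inr, mint_last]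
          rw [Bool.eq_iff_iff]
          simp only [Bool.and_eq_true, decide_eq_true_eq, true_and, mem_filter, mem_univ,
            Prod.mk.eta, e.injective.eq_iff, exists_eq_left, hx]
        · rintro ⟨y, b⟩ h
          rw [Function.comp, tv_pair] at h
          simp [g, lB, lG, mint_last] at h
          ext1
          · exact h.1.symm
          · exact h.2.1.symm)
  refine ⟨S, implements_of S f ⟨fun i => φ (Sum.inr (Sum.inr (Sum.inr (Sum.inr i)))),
    fun a b h => by simpa using φ.injective h⟩ (fun x j => hev x _), hS.trans (le_of_eq ?_)⟩
  simp [c, Fintype.sum_sum_type]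

end Rev
namespace Rev
open Finset

theorem four_le {m : ℕ} (hm6 : 6 ≤ m) : 4 * (m + 1) ≤ 2 ^ m := by
  induction m, hm6 using Nat.le_induction with
  | base => norm_num
  | succ j hj ih => rw [pow_succ]; omega

theorem upper {n q : ℕ} (hn : 24 ≤ n) (hq : n * 2 ^ (n - n / 4 + 4) ≤ q)
    (f : (Fin n → Bool) → Fin n → Bool) :
    ∃ S : Circuit (n + q), Implements S f ∧ S.length ≤ 32 * 2 ^ n := by
  obtain ⟨m, hm⟩ : ∃ m, m = n / 4 := ⟨_, rfl⟩
  obtain ⟨k, hk⟩ : ∃ k, k = n - n / 4 := ⟨_, rfl⟩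
  have hnk : n = m + k := by omega
  have hm6 : 6 ≤ m := by omega
  have hk3 : 3 * m ≤ k := by omega
  rw [← hk] at hq
  clear hk
  have hm4 : m + k ≤ 4 * m + 3 := by omega
  clear hm
  subst hnk
  have h2m : 4 * (m + 1) ≤ 2 ^ m := four_le hm6
  have hmpos : 0 < m := by omega
  have hdm := Nat.div_mul_le_self (2 ^ m) m
  have hlt := Nat.lt_div_mul_add (a := 2 ^ m) hmpos
  have hnb : 2 ^ m ≤ (2 ^ m / m + 1) * m := by rw [add_mul, one_mul]; exact hlt.le
  have hnb2 : 2 ^ m / m + 1 ≤ 2 ^ m := by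
    have : 2 ^ m / m ≤ 2 ^ m / 2 := Nat.div_le_div_left (by omega) (by norm_num)
    omega
  have hnbm : (2 ^ m / m + 1) * m ≤ 2 * 2 ^ m := by rw [add_mul, one_mul]; omega
  generalize 2 ^ m / m + 1 = nb at *
  have hMK : 2 ^ m * (2 ^ m * 2 ^ m) ≤ 2 ^ k := by
    rw [← pow_add, ← pow_add]; exact Nat.pow_le_pow_right (by norm_num) (by omega)
  have hp : 2 ^ (m + k) = 2 ^ m * 2 ^ k := pow_add ..
  have hp4 : 2 ^ (k + 4) = 2 ^ k * 16 := pow_add ..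
  have hlow : 2 ^ m * 2 ^ m ≤ 2 ^ k := le_trans (Nat.le_mul_of_pos_left _ (by positivity)) hMK
  have hlow1 : 2 ^ m ≤ 2 ^ k := Nat.pow_le_pow_right (by norm_num) (by omega)
  rw [hp4] at hq
  generalize hKd : 2 ^ k = K at *
  have a1 : nb * 2 ^ m ≤ K := (Nat.mul_le_mul_right _ hnb2).trans hlow
  have a2 : (m + 1) * 2 ^ m ≤ K := (Nat.mul_le_mul_right _ (by omega)).trans hlow
  obtain ⟨S, hS, hl⟩ := exists_impl (m := m) (k := k) (s := m) (nb := nb) (q := q) hnb (by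
    simp only [Fintype.card_sum, Fintype.card_prod, Fintype.card_fin, Fintype.card_bool,
      Fintype.card_finset, Fintype.card_pi, Finset.prod_const, Finset.card_univ]
    refine le_trans ?_ hq
    have hK : 0 < K := by omega
    have b1 : (m + k) ≤ (m + k) * K := Nat.le_mul_of_pos_right _ hK
    have b2 : K ≤ (m + k) * K := Nat.le_mul_of_pos_left _ (by omega)
    have b3 : (k + 1) * K ≤ (m + k) * K := Nat.mul_le_mul_right _ (by omega)
    have b4 : (m + k) * (K * 16) = (m + k) * K * 16 := (mul_assoc _ _ _).symm
    rw [b4, hKd]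
    omega) f
  refine ⟨S, hS, hl.trans ?_⟩
  rw [hp, hKd]
  have hK : 0 < K := by omega
  generalize 2 ^ m = M at *
  have b1 : M ≤ M * K := Nat.le_mul_of_pos_right _ hK
  have b2 : K ≤ M * K := Nat.le_mul_of_pos_left _ (by omega)
  have b3 : (k + 1) * K ≤ M * K := Nat.mul_le_mul_right _ (by omega)
  have b4 : nb * M * M ≤ K := by
    rw [mul_assoc]; exact (Nat.mul_le_mul_right _ hnb2).trans hMK
  have b5 : (m + k) * (K * nb) ≤ 10 * (M * K) := by
    calc (m + k) * (K * nb) ≤ (5 * m) * (K * nb) := Nat.mul_le_mul_right _ (by omega)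
      _ = 5 * K * (nb * m) := by ring
      _ ≤ 5 * K * (2 * M) := Nat.mul_le_mul_left _ hnbm
      _ = 10 * (M * K) := by ring
  have b6 : m + k ≤ M := by omega
  omega

end Rev
namespace Rev
open Finset

abbrev Code (N : ℕ) := Option (Fin N) × Option (Fin N) × Option (Fin N)

def act {N : ℕ} (c : Code N) (v : Fin N → Bool) : Fin N → Bool :=
  match c.2.2 with
  | none => v
  | some t => Function.update v t (xor (v t) (c.1.elim true v && c.2.1.elim true v))

theorem exists_code {N : ℕ} (g : Gate N) : ∃ c : Code N, act c = g.apply := by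
  have key : ∀ a b : Option (Fin N),
      (∀ v : Fin N → Bool, decide (∀ i ∈ g.I, v i = true) = (a.elim true v && b.elim true v)) →
      ∃ c : Code N, act c = g.apply := by
    intro a b h
    refine ⟨(a, b, some g.t), ?_⟩
    funext v j
    by_cases hj : j = g.t
    · subst hj; simp [act, Gate.apply, h]
    · simp [act, Gate.apply, hj]
  have h := g.card_le
  interval_cases hc : g.I.card
  · rw [Finset.card_eq_zero] at hc
    exact key none none (by simp [hc])
  · obtain ⟨a, ha⟩ := Finset.card_eq_one.1 hc
    exact key (some a) none (by simp [ha])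
  · obtain ⟨a, b, -, ha⟩ := Finset.card_eq_two.1 hc
    exact key (some a) (some b) (by simp [ha])

theorem exists_codes {N : ℕ} (S : Circuit N) (l : ℕ) (h : S.length ≤ l) :
    ∃ c : Fin l → Code N, ∀ v, (List.ofFn c).foldl (fun v c => act c v) v = Circuit.eval S v := by
  induction l generalizing S with
  | zero =>
    have : S = [] := List.length_eq_zero_iff.1 (by omega)
    subst this
    exact ⟨Fin.elim0, fun v => by simp [Circuit.eval]⟩
  | succ l ih =>
    cases S with
    | nil =>
      obtain ⟨c, hc⟩ := ih [] (by simp)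
      refine ⟨Fin.cons (none, none, none) c, fun v => ?_⟩
      simp only [List.ofFn_cons, List.foldl_cons]
      rw [hc]; rfl
    | cons g S =>
      obtain ⟨c, hc⟩ := ih S (by simpa using h)
      obtain ⟨d, hd⟩ := exists_code g
      refine ⟨Fin.cons d c, fun v => ?_⟩
      simp only [List.ofFn_cons, List.foldl_cons]
      rw [hc, hd]; rfl

theorem counting {n q l : ℕ}
    (h : ∀ f : (Fin n → Bool) → Fin n → Bool,
      ∃ S : Circuit (n + q), Implements S f ∧ S.length ≤ l) :
    2 ^ (n * 2 ^ n) ≤ ((n + q + 1) ^ 3) ^ l * (n + q) ^ n := by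
  let F : (Fin l → Code (n + q)) × (Fin n → Fin (n + q)) → ((Fin n → Bool) → Fin n → Bool) :=
    fun p x j => (List.ofFn p.1).foldl (fun v c => act c v) (pad x) (p.2 j)
  have hF : Function.Surjective F := by
    intro f
    obtain ⟨S, ⟨-, π, hπ⟩, hl⟩ := h f
    obtain ⟨c, hc⟩ := exists_codes S l hl
    refine ⟨(c, fun j => π ⟨j, by omega⟩), ?_⟩
    funext x j
    simp only [F, hc]
    exact hπ x j _
  have := Fintype.card_le_of_surjective F hF
  simp at this
  rw [pow_mul]
  convert this using 3
  ring

theorem lower {n q l : ℕ} (hn : 5 ≤ n) (hq : n + q + 1 ≤ 2 ^ (2 * n))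
    (h : ∀ f : (Fin n → Bool) → Fin n → Bool,
      ∃ S : Circuit (n + q), Implements S f ∧ S.length ≤ l) : 2 ^ n ≤ 12 * l := by
  have h1 := counting h
  have h2 : ((n + q + 1) ^ 3) ^ l * (n + q) ^ n ≤ ((2 ^ (2 * n)) ^ 3) ^ l * (2 ^ (2 * n)) ^ n := by
    gcongr; omega
  have h3 := h1.trans h2
  rw [← pow_mul, ← pow_mul, ← pow_mul, ← pow_add] at h3
  have h4 := (Nat.pow_le_pow_iff_right (by norm_num)).1 h3
  have h5 : 2 ^ n ≤ 6 * l + 2 * n := by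
    refine Nat.le_of_mul_le_mul_left (h4.trans (le_of_eq ?_)) (show 0 < n by omega)
    ring
  have h6 : 4 * n ≤ 2 ^ n := by
    clear h1 h2 h3 h4 h5 h hq
    induction n, hn using Nat.le_induction with
    | base => norm_num
    | succ j hj ih => rw [pow_succ]; omega
  omega

theorem Lsh_bounds {n q : ℕ} (hn : 24 ≤ n) (hq : n * 2 ^ (n - n / 4 + 4) ≤ q)
    (hq' : n + q + 1 ≤ 2 ^ (2 * n)) : 2 ^ n ≤ 12 * Lsh n q ∧ Lsh n q ≤ 32 * 2 ^ n := by
  have hub : ∀ l ∈ {l | ∃ f, Implementable n q f ∧ Lmin n q f = l}, l ≤ 32 * 2 ^ n := by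
    rintro l ⟨f, -, rfl⟩
    obtain ⟨S, hS, hl⟩ := upper hn hq f
    have : Lmin n q f ≤ S.L := Nat.sInf_le ⟨S, hS, rfl⟩
    exact this.trans hl
  refine ⟨lower (q := q) (by omega) hq' fun f => ?_, csSup_le' hub⟩
  obtain ⟨S, hS, hl⟩ := upper hn hq f
  obtain ⟨S', hS', hl'⟩ := Nat.sInf_mem (s := {l | ∃ S : Circuit (n + q), Implements S f ∧ S.L = l})
    ⟨_, S, hS, rfl⟩
  refine ⟨S', hS', ?_⟩
  change S'.L ≤ _
  rw [hl']
  exact le_csSup ⟨_, hub⟩ ⟨f, ⟨S, hS⟩, rfl⟩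

end Rev
namespace Rev

/-- For any growing functions `ψ` and `φ` with `φ(n) ≤ n / (log₂ n + log₂ ψ(n))` for
all sufficiently large `n`, there is a sequence `q₀(n) ~ n · 2^{n - ⌈n/φ(n)⌉}` with
`L(n, q₀(n)) ≍ 2ⁿ`. -/
theorem complexity_order_with_memory (ψ φ : ℕ → ℝ) (hψ : Growing ψ) (hφ : Growing φ)
    (hφψ : ∀ᶠ n in atTop, φ n ≤ (n : ℝ) / (Real.logb 2 n + Real.logb 2 (ψ n))) :
    ∃ q₀ : ℕ → ℕ,
      AsympEquiv (fun n => (q₀ n : ℝ)) (fun n => (n : ℝ) * pow2e φ n) ∧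
      ∃ (c C : ℝ) (N : ℕ), 0 < c ∧ c ≤ C ∧ ∀ n ≥ N,
        c * (2 : ℝ) ^ n ≤ (Lsh n (q₀ n) : ℝ) ∧
        (Lsh n (q₀ n) : ℝ) ≤ C * (2 : ℝ) ^ n := by
  have hev : ∀ᶠ n : ℕ in atTop, 96 ≤ n ∧ 8 ≤ φ n := by
    exact (eventually_ge_atTop 96).and (hφ.2.eventually_ge_atTop 8)
  have hk : ∀ᶠ n : ℕ in atTop, 96 ≤ n ∧ (0 : ℤ) ≤ ⌈(n : ℝ) / φ n⌉ ∧
      ⌈(n : ℝ) / φ n⌉ ≤ (n / 8 : ℕ) + 1 := by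
    filter_upwards [hev] with n hn
    have hpos : (0 : ℝ) < φ n := by linarith [hn.2]
    refine ⟨hn.1, Int.ceil_nonneg (by positivity), ?_⟩
    rw [Int.ceil_le]
    have h1 : (n : ℝ) / φ n ≤ n / 8 := by gcongr; exact hn.2
    have h2 : (n : ℝ) ≤ 8 * ((n / 8 : ℕ) + 1) := by
      have : n ≤ 8 * (n / 8 + 1) := by omega
      exact_mod_cast this
    rw [Int.cast_add, Int.cast_natCast, Int.cast_one]
    linarith
  have hlow : ∀ᶠ n : ℕ in atTop, ((n * 2 ^ (n - n / 4 + 4) : ℕ) : ℝ) ≤ (n : ℝ) * pow2e φ n := by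
    filter_upwards [hk] with n hn
    obtain ⟨h1, h2, h3⟩ := hn
    push_cast
    gcongr
    unfold pow2e
    rw [← zpow_natCast]
    apply zpow_le_zpow_right₀ (by norm_num)
    omega
  have hup : ∀ᶠ n : ℕ in atTop, (n : ℝ) * pow2e φ n ≤ ((n * 2 ^ n : ℕ) : ℝ) := by
    filter_upwards [hk] with n hn
    obtain ⟨h1, h2, h3⟩ := hn
    push_cast
    gcongr
    unfold pow2e
    rw [← zpow_natCast]
    apply zpow_le_zpow_right₀ (by norm_num)
    omega
  have htop : Tendsto (fun n : ℕ => (n : ℝ) * pow2e φ n) atTop atTop := by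
    refine tendsto_atTop_mono' _ ?_ tendsto_natCast_atTop_atTop
    filter_upwards [hlow] with n hn
    refine le_trans ?_ hn
    exact_mod_cast Nat.le_mul_of_pos_right _ (by positivity)
  refine ⟨fun n => ⌈(n : ℝ) * pow2e φ n⌉₊, ?_, ?_⟩
  · exact tendsto_nat_ceil_div_atTop.comp htop
  obtain ⟨N, hN⟩ := eventually_atTop.1 (hk.and (hlow.and hup))
  refine ⟨1 / 12, 32, N, by norm_num, by norm_num, fun n hn => ?_⟩
  obtain ⟨⟨h1, -, -⟩, hl, hu⟩ := hN n hn
  have hl' : n * 2 ^ (n - n / 4 + 4) ≤ ⌈(n : ℝ) * pow2e φ n⌉₊ := by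
    exact_mod_cast hl.trans (Nat.le_ceil _)
  have hu' : ⌈(n : ℝ) * pow2e φ n⌉₊ ≤ n * 2 ^ n := Nat.ceil_le.2 hu
  have h4 := four_le (m := n) (by omega)
  have hb : n + ⌈(n : ℝ) * pow2e φ n⌉₊ + 1 ≤ 2 ^ (2 * n) := by
    rw [two_mul, pow_add]
    have : (n + 1) * 2 ^ n ≤ 2 ^ n * 2 ^ n := Nat.mul_le_mul_right _ (by omega)
    rw [add_mul] at this
    omega
  obtain ⟨ha, hb⟩ := Lsh_bounds (by omega) hl' hb
  constructor
  · have : (2 : ℝ) ^ n ≤ 12 * Lsh n ⌈(n : ℝ) * pow2e φ n⌉₊ := by exact_mod_cast ha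
    linarith
  · exact_mod_cast hb

end Rev
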